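/- Let 0 < α < 1 and let C₀ > 0. Suppose K : 𝕋 × 𝕋 → ℂ is measurable on 𝕋 × 𝕋 ∖ {(w,w) : w ∈ 𝕋} and satisfies |K(w,τ)| ≤ C₀/|w−τ|^α for all w ≠ τ in 𝕋; suppose moreover that for each fixed τ ∈ 𝕋 the map θ ↦ K(e^{iθ}, τ) is differentiable at every θ with e^{iθ} ≠ τ, with derivative bounded by C₀/|e^{iθ}−τ|^{1+α}. Then there is a constant C_α depending only on α such that for every bounded measurable f : 𝕋 → ℂ, the function 𝒯f(w) = (1/(2πi)) ∫_{𝕋} K(w,τ) f(τ) dτ satisfies sup_{w∈𝕋} |𝒯f(w)| ≤ C_α C₀ ‖f‖_{L^∞(𝕋)} and |𝒯f(w₁) − 𝒯f(w₂)| ≤ C_α C₀ ‖f‖_{L^∞(𝕋)} |w₁ − w₂|^{1−α} for all w₁, w₂ ∈ 𝕋. -/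

import Mathlib

/-- Mean value of a function over the positively oriented unit circle:
`(1/(2πi)) ∫_𝕋 g(τ) dτ`. -/
noncomputable def circAvg (g : ℂ → ℂ) : ℂ :=
  (2 * (Real.pi : ℂ) * Complex.I)⁻¹ * ∮ τ in C(0, 1), g τ

open MeasureTheory Set

lemma aux_abs (g : ℝ → ENNReal) :
    ∫⁻ x, g |x| ≤ 2 * ∫⁻ x in Ioi (0:ℝ), g x := by
  have h1 : ∫⁻ x in Ioi (0:ℝ), g |x| = ∫⁻ x in Ioi (0:ℝ), g x :=
    setLIntegral_congr_fun measurableSet_Ioi (fun x hx => by simp only [abs_of_pos (mem_Ioi.1 hx)])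
  have h2 : ∫⁻ x in Iic (0:ℝ), g |x| = ∫⁻ x in Ioi (0:ℝ), g x := by
    rw [← h1, ← setLIntegral_congr (Iio_ae_eq_Iic (μ := volume) (a := (0:ℝ)))]
    have := (Measure.measurePreserving_neg (volume : Measure ℝ)).setLIntegral_comp_preimage_emb
      (MeasurableEquiv.neg ℝ).measurableEmbedding (fun x => g |x|) (Ioi 0)
    rw [← this]
    simp
  rw [← lintegral_add_compl _ (measurableSet_Ioi (a := (0:ℝ))), compl_Ioi, h1, h2, two_mul]

lemma aux_chord (s t : ℝ) : ‖Complex.exp (s * Complex.I) - Complex.exp (t * Complex.I)‖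
    = 2 * |Real.sin ((s - t) / 2)| := by
  have : Complex.exp (s * Complex.I) - Complex.exp (t * Complex.I)
      = Complex.exp (t * Complex.I) * (Complex.exp (Complex.I * ((s - t : ℝ) : ℂ)) - 1) := by
    rw [mul_sub, ← Complex.exp_add]; push_cast; ring_nf
  rw [this, norm_mul, Complex.norm_exp_ofReal_mul_I, Complex.norm_exp_I_mul_ofReal_sub_one]
  simp

lemma aux_chord_le (s t : ℝ) :
    ‖Complex.exp (s * Complex.I) - Complex.exp (t * Complex.I)‖ ≤ |s - t| := by
  rw [aux_chord]
  have := Real.abs_sin_le_abs (x := (s - t) / 2)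
  rw [abs_div, abs_of_pos (by norm_num : (0:ℝ) < 2)] at this
  linarith

lemma aux_le_chord (s t : ℝ) (h : |s - t| ≤ Real.pi) :
    2 / Real.pi * |s - t| ≤ ‖Complex.exp (s * Complex.I) - Complex.exp (t * Complex.I)‖ := by
  rw [aux_chord]
  have := Real.mul_abs_le_abs_sin (x := (s - t) / 2)
    (by rw [abs_div, abs_of_pos (by norm_num : (0:ℝ) < 2)]; linarith)
  rw [abs_div, abs_of_pos (by norm_num : (0:ℝ) < 2)] at this
  linarith

lemma aux_periodic (Φ : ℂ → ENNReal) (a : ℝ) :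
    ∫⁻ θ in Ioc (0:ℝ) (2 * Real.pi), Φ (Complex.exp (θ * Complex.I)) =
    ∫⁻ θ in Ioc (a - Real.pi) (a + Real.pi), Φ (Complex.exp (θ * Complex.I)) := by
  have h1 := isAddFundamentalDomain_Ioc Real.two_pi_pos 0 volume
  have h2 := isAddFundamentalDomain_Ioc Real.two_pi_pos (a - Real.pi) volume
  rw [zero_add] at h1
  rw [show a - Real.pi + 2 * Real.pi = a + Real.pi by ring] at h2
  apply h1.setLIntegral_eq h2
  rintro ⟨g, hg⟩ x
  obtain ⟨n, rfl⟩ := AddSubgroup.mem_zmultiples_iff.1 hg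
  congr 1
  rw [Complex.exp_eq_exp_iff_exists_int]
  refine ⟨n, ?_⟩
  rw [AddSubgroup.mk_vadd]
  simp
  ring

lemma aux_compare (Φ g : ℝ → ENNReal) (a : ℝ)
    (h : ∀ t : ℝ, |a - t| ≤ Real.pi →
      Φ ‖Complex.exp (a * Complex.I) - Complex.exp (t * Complex.I)‖ ≤ g |a - t|) :
    ∫⁻ θ in Ioc (0:ℝ) (2 * Real.pi),
      Φ ‖Complex.exp (a * Complex.I) - Complex.exp (θ * Complex.I)‖ ≤
    2 * ∫⁻ x in Ioi (0:ℝ), g x := by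
  rw [aux_periodic (fun z => Φ ‖Complex.exp (a * Complex.I) - z‖) a]
  calc _ ≤ ∫⁻ θ in Ioc (a - Real.pi) (a + Real.pi), g |a - θ| := by
        apply setLIntegral_mono' measurableSet_Ioc
        intro t ht
        apply h
        rw [abs_le]; constructor <;> linarith [ht.1, ht.2]
    _ ≤ ∫⁻ θ, g |a - θ| := setLIntegral_le_lintegral _ _
    _ = ∫⁻ θ, g |θ| := lintegral_sub_left_eq_self (fun θ => g |θ|) a
    _ ≤ _ := aux_abs g

/-- Truncated near-diagonal kernel. -/
noncomputable def auxN (α r x : ℝ) : ENNReal :=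
  if x < r then ENNReal.ofReal (x ^ (-α)) else 0

/-- Truncated off-diagonal kernel. -/
noncomputable def auxF (α r x : ℝ) : ENNReal :=
  if r ≤ x then ENNReal.ofReal (x ^ (-(1 + α))) else 0

lemma auxN_meas (α r : ℝ) : Measurable (auxN α r) :=
  Measurable.ite measurableSet_Iio (by fun_prop) measurable_const

lemma auxF_meas (α r : ℝ) : Measurable (auxF α r) :=
  Measurable.ite measurableSet_Ici (by fun_prop) measurable_const

lemma aux_near (α : ℝ) (hα0 : 0 < α) (hα1 : α < 1) (a r : ℝ) (hr : 0 < r) :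
    ∫⁻ θ in Ioc (0:ℝ) (2 * Real.pi),
      auxN α r ‖Complex.exp (a * Complex.I) - Complex.exp (θ * Complex.I)‖ ≤
    ENNReal.ofReal (2 * ((2 / Real.pi) ^ (-α) * ((Real.pi / 2 * r) ^ (1 - α) / (1 - α)))) := by
  have hpi := Real.pi_pos
  set R := Real.pi / 2 * r with hR
  have hRp : 0 < R := by positivity
  refine (aux_compare (auxN α r) (fun x => (Ioc 0 R).indicator
    (fun x => ENNReal.ofReal ((2 / Real.pi) ^ (-α) * x ^ (-α))) x) a ?_).trans ?_
  · intro t ht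
    have h1 := aux_le_chord a t ht
    set x := ‖Complex.exp (a * Complex.I) - Complex.exp (t * Complex.I)‖
    dsimp only [auxN, auxF]
    split_ifs with hx
    · rcases eq_or_ne a t with rfl | hne
      · have : x = 0 := by simp [x]
        rw [this, Real.zero_rpow (by linarith)]; simp
      have hp : 0 < |a - t| := abs_pos.2 (sub_ne_zero.2 hne)
      rw [indicator_of_mem]
      · rw [← Real.mul_rpow (by positivity) (by positivity)]
        exact ENNReal.ofReal_le_ofReal
          (Real.rpow_le_rpow_of_nonpos (by positivity) h1 (by linarith))
      · refine ⟨hp, ?_⟩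
        have h2 : 2 / Real.pi * |a - t| ≤ r := by linarith
        rw [div_mul_eq_mul_div, div_le_iff₀ hpi] at h2
        rw [hR]; linarith
    · exact zero_le
  · rw [ENNReal.ofReal_mul (by norm_num), ENNReal.ofReal_ofNat]
    gcongr
    rw [setLIntegral_indicator measurableSet_Ioc, inter_eq_left.2 Ioc_subset_Ioi_self]
    have hi : IntervalIntegrable (fun x : ℝ => (2 / Real.pi) ^ (-α) * x ^ (-α)) volume 0 R :=
      (intervalIntegral.intervalIntegrable_rpow' (by linarith)).const_mul _
    rw [intervalIntegrable_iff_integrableOn_Ioc_of_le hRp.le] at hi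
    rw [← ofReal_integral_eq_lintegral_ofReal hi, ← intervalIntegral.integral_of_le hRp.le,
      intervalIntegral.integral_const_mul, integral_rpow (Or.inl (by linarith)),
      Real.zero_rpow (by linarith), sub_zero, show -α + 1 = 1 - α by ring]
    filter_upwards [ae_restrict_mem measurableSet_Ioc] with x hx
    have := hx.1
    positivity

lemma aux_far (α : ℝ) (hα0 : 0 < α) (a r : ℝ) (hr : 0 < r) :
    ∫⁻ θ in Ioc (0:ℝ) (2 * Real.pi),
      auxF α r ‖Complex.exp (a * Complex.I) - Complex.exp (θ * Complex.I)‖ ≤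
    ENNReal.ofReal (2 * ((2 / Real.pi) ^ (-(1 + α)) * ((r / 2) ^ (-α) / α))) := by
  have hpi := Real.pi_pos
  refine (aux_compare (auxF α r) (fun x => (Ioi (r / 2)).indicator
    (fun x => ENNReal.ofReal ((2 / Real.pi) ^ (-(1 + α)) * x ^ (-(1 + α)))) x) a ?_).trans ?_
  · intro t ht
    have h1 := aux_le_chord a t ht
    have h2 := aux_chord_le a t
    set x := ‖Complex.exp (a * Complex.I) - Complex.exp (t * Complex.I)‖
    dsimp only [auxN, auxF]
    split_ifs with hx
    · have hp : 0 < |a - t| := by linarith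
      rw [indicator_of_mem]
      · rw [← Real.mul_rpow (by positivity) (by positivity)]
        exact ENNReal.ofReal_le_ofReal
          (Real.rpow_le_rpow_of_nonpos (by positivity) h1 (by linarith))
      · show r / 2 < |a - t|
        linarith
    · exact zero_le
  · rw [ENNReal.ofReal_mul (by norm_num), ENNReal.ofReal_ofNat]
    gcongr
    rw [setLIntegral_indicator measurableSet_Ioi,
      inter_eq_left.2 (Ioi_subset_Ioi (by positivity))]
    have hi : IntegrableOn (fun x : ℝ => (2 / Real.pi) ^ (-(1 + α)) * x ^ (-(1 + α)))
        (Ioi (r / 2)) volume :=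
      (integrableOn_Ioi_rpow_of_lt (by linarith) (by positivity)).const_mul _
    rw [← ofReal_integral_eq_lintegral_ofReal hi,
      integral_const_mul, integral_Ioi_rpow_of_lt (by linarith) (by positivity),
      show -(1 + α) + 1 = -α by ring, neg_div_neg_eq]
    filter_upwards [ae_restrict_mem measurableSet_Ioi] with x hx
    have : 0 < x := lt_trans (by positivity) (mem_Ioi.1 hx)
    positivity

lemma aux_circ (g : ℂ → ℂ) : ‖circAvg g‖ₑ ≤
    ∫⁻ θ in Ioc (0:ℝ) (2 * Real.pi), ‖g (Complex.exp (θ * Complex.I))‖ₑ := by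
  have hpi := Real.pi_gt_three
  unfold circAvg circleIntegral
  rw [enorm_mul, intervalIntegral.integral_of_le Real.two_pi_pos.le]
  have h1 : ‖(2 * (Real.pi : ℂ) * Complex.I)⁻¹‖ₑ ≤ 1 := by
    rw [← ofReal_norm]
    simp only [norm_inv, norm_mul, Complex.norm_I, mul_one, Complex.norm_real,
      Complex.norm_ofNat, Real.norm_eq_abs, abs_of_pos Real.pi_pos]
    apply ENNReal.ofReal_le_one.2
    apply inv_le_one_of_one_le₀
    linarith
  refine (mul_le_mul' h1 (enorm_integral_le_lintegral_enorm _)).trans ?_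
  rw [one_mul]
  apply lintegral_mono
  intro θ
  have h2 : ‖Complex.exp (θ * Complex.I)‖ₑ = 1 := by
    rw [← ofReal_norm, Complex.norm_exp_ofReal_mul_I, ENNReal.ofReal_one]
  have h3 : ‖Complex.I‖ₑ = 1 := by
    rw [← ofReal_norm, Complex.norm_I, ENNReal.ofReal_one]
  simp [circleMap, enorm_smul, enorm_mul, deriv_circleMap, h2, h3]

lemma aux_ae (w : ℂ) : ∀ᵐ θ : ℝ ∂(volume.restrict (Ioc (0:ℝ) (2 * Real.pi))),
    w ≠ Complex.exp (θ * Complex.I) := by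
  apply ae_restrict_of_ae
  have h : (circleMap 0 1 ⁻¹' {w}).Countable :=
    (countable_singleton w).preimage_circleMap 0 one_ne_zero
  filter_upwards [h.ae_notMem volume] with θ hθ h'
  apply hθ
  simp [circleMap, h']

lemma aux_aemeas (K : ℂ → ℂ → ℂ)
    (hK : Measurable (({p : ℂ × ℂ | ‖p.1‖ = 1 ∧ ‖p.2‖ = 1 ∧ p.1 ≠ p.2}).restrict
          fun p : ℂ × ℂ => K p.1 p.2)) (w : ℂ) (hw : ‖w‖ = 1) :
    AEMeasurable (fun θ : ℝ => K w (Complex.exp (θ * Complex.I)))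
      (volume.restrict (Ioc (0:ℝ) (2 * Real.pi))) := by
  set S : Set ℝ := {θ | w ≠ Complex.exp (θ * Complex.I)} with hS
  have hc : Measurable (fun θ : ℝ => Complex.exp (θ * Complex.I)) := by fun_prop
  have hSm : MeasurableSet S := (measurableSet_eq_fun measurable_const hc).compl
  have hres : (volume.restrict (Ioc (0:ℝ) (2 * Real.pi))).restrict S =
      volume.restrict (Ioc (0:ℝ) (2 * Real.pi)) :=
    Measure.restrict_eq_self_of_ae_mem (aux_ae w)
  rw [← hres]
  apply aemeasurable_restrict_of_measurable_subtype hSm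
  have hm : Measurable (fun θ : S => (⟨(w, Complex.exp ((θ : ℝ) * Complex.I)),
      hw, Complex.norm_exp_ofReal_mul_I _, θ.2⟩ :
      {p : ℂ × ℂ | ‖p.1‖ = 1 ∧ ‖p.2‖ = 1 ∧ p.1 ≠ p.2})) :=
    Measurable.subtype_mk (measurable_const.prodMk (hc.comp measurable_subtype_coe))
  exact hK.comp hm

lemma aux_K_le (α C₀ : ℝ) (K : ℂ → ℂ → ℂ)
    (hK : ∀ w τ : ℂ, ‖w‖ = 1 → ‖τ‖ = 1 → w ≠ τ → ‖K w τ‖ ≤ C₀ / ‖w - τ‖ ^ α)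
    (hC : 0 < C₀) (r : ℝ) (w τ : ℂ) (hw : ‖w‖ = 1) (hτ : ‖τ‖ = 1) (h : w ≠ τ)
    (hr : ‖w - τ‖ < r) :
    ‖K w τ‖ₑ ≤ ENNReal.ofReal C₀ * auxN α r ‖w - τ‖ := by
  rw [auxN, if_pos hr, ← ENNReal.ofReal_mul hC.le, ← ofReal_norm]
  apply ENNReal.ofReal_le_ofReal
  rw [Real.rpow_neg (norm_nonneg _), ← div_eq_mul_inv]
  exact hK w τ hw hτ h

lemma aux_f_le (f : ℂ → ℂ) (M : ℝ) (hf : ∀ τ : ℂ, ‖τ‖ = 1 → ‖f τ‖ ≤ M) (τ : ℂ) (hτ : ‖τ‖ = 1) :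
    ‖f τ‖ₑ ≤ ENNReal.ofReal M := by
  rw [← ofReal_norm]
  exact ENNReal.ofReal_le_ofReal (hf τ hτ)

lemma aux_total (α : ℝ) (hα0 : 0 < α) (hα1 : α < 1) (C₀ : ℝ) (hC : 0 < C₀) (K : ℂ → ℂ → ℂ)
    (hK : ∀ w τ : ℂ, ‖w‖ = 1 → ‖τ‖ = 1 → w ≠ τ → ‖K w τ‖ ≤ C₀ / ‖w - τ‖ ^ α)
    (f : ℂ → ℂ) (M : ℝ) (hf : ∀ τ : ℂ, ‖τ‖ = 1 → ‖f τ‖ ≤ M) (a : ℝ) :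
    ∫⁻ θ in Ioc (0:ℝ) (2 * Real.pi),
      ‖K (Complex.exp (a * Complex.I)) (Complex.exp (θ * Complex.I)) *
        f (Complex.exp (θ * Complex.I))‖ₑ ≤
    ENNReal.ofReal C₀ * ENNReal.ofReal M *
    ENNReal.ofReal (2 * ((2 / Real.pi) ^ (-α) * ((Real.pi / 2 * 3) ^ (1 - α) / (1 - α)))) := by
  refine le_trans ?_ (mul_le_mul_right (aux_near α hα0 hα1 a 3 (by norm_num)) _)
  rw [← lintegral_const_mul' _ _ (by finiteness)]
  apply lintegral_mono_ae
  filter_upwards [aux_ae (Complex.exp (a * Complex.I))] with θ hθ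
  have hτ := Complex.norm_exp_ofReal_mul_I θ
  have hw := Complex.norm_exp_ofReal_mul_I a
  rw [enorm_mul]
  calc _ ≤ (ENNReal.ofReal C₀ * auxN α 3
          ‖Complex.exp (a * Complex.I) - Complex.exp (θ * Complex.I)‖) * ENNReal.ofReal M := by
        gcongr
        · apply aux_K_le α C₀ K hK hC 3 _ _ hw hτ hθ
          have := norm_sub_le (Complex.exp (a * Complex.I)) (Complex.exp (θ * Complex.I))
          linarith
        · exact aux_f_le f M hf _ hτ
    _ = _ := by ring

lemma aux_diff_pt (α : ℝ) (hα0 : 0 < α) (C₀ : ℝ) (hC : 0 < C₀) (K : ℂ → ℂ → ℂ)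
    (hK : ∀ w τ : ℂ, ‖w‖ = 1 → ‖τ‖ = 1 → w ≠ τ → ‖K w τ‖ ≤ C₀ / ‖w - τ‖ ^ α)
    (hD : ∀ τ : ℂ, ‖τ‖ = 1 → ∀ θ : ℝ, Complex.exp (θ * Complex.I) ≠ τ →
          ∃ d : ℂ, HasDerivAt (fun s : ℝ => K (Complex.exp (s * Complex.I)) τ) d θ ∧
            ‖d‖ ≤ C₀ / ‖Complex.exp (θ * Complex.I) - τ‖ ^ (1 + α))
    (a b δ : ℝ) (hδ : 0 < δ) (hab : |a - b| = δ) (τ : ℂ) (hτ : ‖τ‖ = 1)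
    (ha : Complex.exp (a * Complex.I) ≠ τ) (hb : Complex.exp (b * Complex.I) ≠ τ) :
    ‖K (Complex.exp (a * Complex.I)) τ - K (Complex.exp (b * Complex.I)) τ‖ₑ ≤
      ENNReal.ofReal C₀ * (auxN α (2 * δ) ‖Complex.exp (a * Complex.I) - τ‖ +
        auxN α (3 * δ) ‖Complex.exp (b * Complex.I) - τ‖ +
        ENNReal.ofReal (δ * 2 ^ (1 + α)) * auxF α (2 * δ) ‖Complex.exp (a * Complex.I) - τ‖) := by
  have hwa := Complex.norm_exp_ofReal_mul_I a
  have hwb := Complex.norm_exp_ofReal_mul_I b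
  by_cases hn : ‖Complex.exp (a * Complex.I) - τ‖ < 2 * δ
  · have h3 : ‖Complex.exp (b * Complex.I) - τ‖ < 3 * δ := by
      have h1 := norm_sub_le_norm_sub_add_norm_sub (Complex.exp (b * Complex.I))
        (Complex.exp (a * Complex.I)) τ
      have h2 := aux_chord_le b a
      rw [abs_sub_comm, hab] at h2
      linarith
    calc _ ≤ ‖K (Complex.exp (a * Complex.I)) τ‖ₑ + ‖K (Complex.exp (b * Complex.I)) τ‖ₑ :=
          enorm_sub_le
      _ ≤ ENNReal.ofReal C₀ * auxN α (2 * δ) ‖Complex.exp (a * Complex.I) - τ‖ +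
          ENNReal.ofReal C₀ * auxN α (3 * δ) ‖Complex.exp (b * Complex.I) - τ‖ :=
          add_le_add (aux_K_le α C₀ K hK hC _ _ _ hwa hτ ha hn)
            (aux_K_le α C₀ K hK hC _ _ _ hwb hτ hb h3)
      _ ≤ _ := by
          rw [← mul_add]
          exact mul_le_mul_right le_self_add _
  · push Not at hn
    set ρ := ‖Complex.exp (a * Complex.I) - τ‖ with hρ
    have hρ0 : 0 < ρ := by linarith
    have key : ∀ s ∈ uIcc a b, ρ / 2 ≤ ‖Complex.exp (s * Complex.I) - τ‖ := by
      intro s hs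
      have h1 := norm_sub_le_norm_sub_add_norm_sub (Complex.exp (a * Complex.I))
        (Complex.exp (s * Complex.I)) τ
      have h2 := aux_chord_le a s
      have h3 := abs_sub_left_of_mem_uIcc hs
      rw [abs_sub_comm s a, abs_sub_comm b a] at h3
      linarith
    have hne : ∀ s ∈ uIcc a b, Complex.exp (s * Complex.I) ≠ τ := by
      intro s hs h
      have := key s hs
      rw [h, sub_self, norm_zero] at this
      linarith
    have hmv := Convex.norm_image_sub_le_of_norm_deriv_le
      (f := fun s : ℝ => K (Complex.exp (s * Complex.I)) τ) (C := C₀ / (ρ / 2) ^ (1 + α))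
      (s := uIcc a b) (x := b) (y := a)
      (fun s hs => by
        obtain ⟨d, hd, -⟩ := hD τ hτ s (hne s hs)
        exact hd.differentiableAt)
      (fun s hs => by
        obtain ⟨d, hd, hd'⟩ := hD τ hτ s (hne s hs)
        rw [hd.deriv]
        refine hd'.trans ?_
        have := key s hs
        gcongr)
      (convex_uIcc a b) right_mem_uIcc left_mem_uIcc
    rw [Real.norm_eq_abs, hab] at hmv
    calc _ ≤ ENNReal.ofReal C₀ * (ENNReal.ofReal (δ * 2 ^ (1 + α)) * auxF α (2 * δ) ρ) := by
          rw [auxF, if_pos hn, ← ENNReal.ofReal_mul (by positivity), ← ENNReal.ofReal_mul hC.le,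
            ← ofReal_norm]
          apply ENNReal.ofReal_le_ofReal
          refine hmv.trans (le_of_eq ?_)
          rw [Real.div_rpow hρ0.le (by norm_num), Real.rpow_neg hρ0.le]
          field_simp
      _ ≤ _ := by
          gcongr
          exact le_add_self

lemma aux_diff (α : ℝ) (hα0 : 0 < α) (hα1 : α < 1) (C₀ : ℝ) (hC : 0 < C₀) (K : ℂ → ℂ → ℂ)
    (hK : ∀ w τ : ℂ, ‖w‖ = 1 → ‖τ‖ = 1 → w ≠ τ → ‖K w τ‖ ≤ C₀ / ‖w - τ‖ ^ α)
    (hD : ∀ τ : ℂ, ‖τ‖ = 1 → ∀ θ : ℝ, Complex.exp (θ * Complex.I) ≠ τ →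
          ∃ d : ℂ, HasDerivAt (fun s : ℝ => K (Complex.exp (s * Complex.I)) τ) d θ ∧
            ‖d‖ ≤ C₀ / ‖Complex.exp (θ * Complex.I) - τ‖ ^ (1 + α))
    (f : ℂ → ℂ) (M : ℝ) (hf : ∀ τ : ℂ, ‖τ‖ = 1 → ‖f τ‖ ≤ M)
    (a b δ : ℝ) (hδ : 0 < δ) (hab : |a - b| = δ) :
    ∫⁻ θ in Ioc (0:ℝ) (2 * Real.pi),
      ‖(K (Complex.exp (a * Complex.I)) (Complex.exp (θ * Complex.I)) -
        K (Complex.exp (b * Complex.I)) (Complex.exp (θ * Complex.I))) *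
        f (Complex.exp (θ * Complex.I))‖ₑ ≤
    ENNReal.ofReal C₀ * ENNReal.ofReal M *
      (ENNReal.ofReal (2 * ((2 / Real.pi) ^ (-α) *
          ((Real.pi / 2 * (2 * δ)) ^ (1 - α) / (1 - α)))) +
       ENNReal.ofReal (2 * ((2 / Real.pi) ^ (-α) *
          ((Real.pi / 2 * (3 * δ)) ^ (1 - α) / (1 - α)))) +
       ENNReal.ofReal (δ * 2 ^ (1 + α)) *
         ENNReal.ofReal (2 * ((2 / Real.pi) ^ (-(1 + α)) * ((2 * δ / 2) ^ (-α) / α)))) := by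
  have hN1 := aux_near α hα0 hα1 a (2 * δ) (by positivity)
  have hN2 := aux_near α hα0 hα1 b (3 * δ) (by positivity)
  have hF := aux_far α hα0 a (2 * δ) (by positivity)
  refine le_trans ?_ (mul_le_mul_right
    (add_le_add (add_le_add hN1 hN2) (mul_le_mul_right hF _)) _)
  have m1 := auxN_meas α (2 * δ)
  have m2 := auxN_meas α (3 * δ)
  rw [← lintegral_const_mul' _ _ (by finiteness), ← lintegral_add_left (by fun_prop),
    ← lintegral_add_left (by fun_prop), ← lintegral_const_mul' _ _ (by finiteness)]
  apply lintegral_mono_ae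
  filter_upwards [aux_ae (Complex.exp (a * Complex.I)), aux_ae (Complex.exp (b * Complex.I))]
    with θ h1 h2
  have hτ := Complex.norm_exp_ofReal_mul_I θ
  rw [enorm_mul]
  refine (mul_le_mul' (aux_diff_pt α hα0 C₀ hC K hK hD a b δ hδ hab _ hτ h1 h2)
    (aux_f_le f M hf _ hτ)).trans (le_of_eq ?_)
  ring

lemma aux_circInt (α : ℝ) (hα0 : 0 < α) (hα1 : α < 1) (C₀ : ℝ) (hC : 0 < C₀) (K : ℂ → ℂ → ℂ)
    (hKm : Measurable (({p : ℂ × ℂ | ‖p.1‖ = 1 ∧ ‖p.2‖ = 1 ∧ p.1 ≠ p.2}).restrict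
          fun p : ℂ × ℂ => K p.1 p.2))
    (hK : ∀ w τ : ℂ, ‖w‖ = 1 → ‖τ‖ = 1 → w ≠ τ → ‖K w τ‖ ≤ C₀ / ‖w - τ‖ ^ α)
    (f : ℂ → ℂ) (M : ℝ) (hfm : Measurable f) (hf : ∀ τ : ℂ, ‖τ‖ = 1 → ‖f τ‖ ≤ M) (a : ℝ) :
    CircleIntegrable (fun τ => K (Complex.exp (a * Complex.I)) τ * f τ) 0 1 := by
  rw [circleIntegrable_def, intervalIntegrable_iff_integrableOn_Ioc_of_le Real.two_pi_pos.le]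
  simp only [circleMap, Complex.ofReal_one, one_mul, zero_add]
  refine ⟨?_, ?_⟩
  · apply AEMeasurable.aestronglyMeasurable
    apply (aux_aemeas K hKm _ (Complex.norm_exp_ofReal_mul_I a)).mul
    fun_prop
  · exact (aux_total α hα0 hα1 C₀ hC K hK f M hf a).trans_lt (by finiteness)

lemma aux_param (w₁ w₂ : ℂ) (h1 : ‖w₁‖ = 1) (h2 : ‖w₂‖ = 1) :
    ∃ a b : ℝ, w₁ = Complex.exp (a * Complex.I) ∧ w₂ = Complex.exp (b * Complex.I) ∧
      |a - b| ≤ Real.pi := by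
  have hu : ∀ w : ℂ, ‖w‖ = 1 → Complex.exp (w.arg * Complex.I) = w := by
    intro w hw
    have := Complex.norm_mul_exp_arg_mul_I w
    rwa [hw, Complex.ofReal_one, one_mul] at this
  have h0 : w₁ ≠ 0 := by rintro rfl; simp at h1
  refine ⟨w₁.arg, w₁.arg + (w₂ / w₁).arg, (hu _ h1).symm, ?_, ?_⟩
  · push_cast
    rw [add_mul, Complex.exp_add, hu _ h1, hu _ (by rw [norm_div, h1, h2, div_one])]
    field_simp
  · rw [sub_add_cancel_left, abs_neg]
    exact Complex.abs_arg_le_pi _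

theorem stmt0 (α : ℝ) (hα0 : 0 < α) (hα1 : α < 1) :
    ∃ Cα : ℝ, 0 < Cα ∧
      ∀ (C₀ : ℝ), 0 < C₀ → ∀ (K : ℂ → ℂ → ℂ),
        Measurable (({p : ℂ × ℂ | ‖p.1‖ = 1 ∧ ‖p.2‖ = 1 ∧ p.1 ≠ p.2}).restrict
          fun p : ℂ × ℂ => K p.1 p.2) →
        (∀ w τ : ℂ, ‖w‖ = 1 → ‖τ‖ = 1 → w ≠ τ → ‖K w τ‖ ≤ C₀ / ‖w - τ‖ ^ α) →
        (∀ τ : ℂ, ‖τ‖ = 1 → ∀ θ : ℝ, Complex.exp (θ * Complex.I) ≠ τ →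
          ∃ d : ℂ, HasDerivAt (fun s : ℝ => K (Complex.exp (s * Complex.I)) τ) d θ ∧
            ‖d‖ ≤ C₀ / ‖Complex.exp (θ * Complex.I) - τ‖ ^ (1 + α)) →
        ∀ (f : ℂ → ℂ) (M : ℝ), Measurable f → (∀ τ : ℂ, ‖τ‖ = 1 → ‖f τ‖ ≤ M) →
          (∀ w : ℂ, ‖w‖ = 1 →
            ‖circAvg (fun τ => K w τ * f τ)‖ ≤ Cα * C₀ * M) ∧
          (∀ w₁ w₂ : ℂ, ‖w₁‖ = 1 → ‖w₂‖ = 1 →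
            ‖circAvg (fun τ => K w₁ τ * f τ) - circAvg (fun τ => K w₂ τ * f τ)‖ ≤
              Cα * C₀ * M * ‖w₁ - w₂‖ ^ (1 - α)) := by
  have hpi := Real.pi_pos
  have h1α : 0 < 1 - α := by linarith
  set A : ℝ := 2 * ((2 / Real.pi) ^ (-α) * ((Real.pi / 2 * 3) ^ (1 - α) / (1 - α))) with hA
  set A2 : ℝ := 2 * ((2 / Real.pi) ^ (-α) * ((Real.pi / 2 * 2) ^ (1 - α) / (1 - α))) with hA2
  set B : ℝ := 2 ^ (1 + α) * (2 * ((2 / Real.pi) ^ (-(1 + α)) / α)) with hB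
  set E : ℝ := (A2 + A + B) * (Real.pi / 2) ^ (1 - α) with hE
  have hA0 : 0 < A := by positivity
  have hA20 : 0 < A2 := by positivity
  have hB0 : 0 < B := by positivity
  have hE0 : 0 < E := by positivity
  refine ⟨A + E, by positivity, ?_⟩
  intro C₀ hC K hKm hK hD f M hfm hf
  have hM : 0 ≤ M := (norm_nonneg _).trans (hf 1 (by simp))
  constructor
  · intro w hw
    obtain ⟨a, -, rfl, -, -⟩ := aux_param w w hw hw
    have h := (aux_circ (fun τ => K (Complex.exp (a * Complex.I)) τ * f τ)).trans
      (aux_total α hα0 hα1 C₀ hC K hK f M hf a)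
    rw [← ofReal_norm, ← ENNReal.ofReal_mul hC.le,
      ← ENNReal.ofReal_mul (by positivity), ENNReal.ofReal_le_ofReal_iff (by positivity)] at h
    refine h.trans ?_
    rw [← hA]
    have : 0 ≤ E * (C₀ * M) := by positivity
    linarith
  · intro w₁ w₂ hw₁ hw₂
    obtain ⟨a, b, rfl, rfl, hab⟩ := aux_param w₁ w₂ hw₁ hw₂
    rcases eq_or_ne a b with rfl | hne
    · simp [Real.zero_rpow h1α.ne']
    set δ := |a - b| with hδ
    have hδ0 : 0 < δ := abs_pos.2 (sub_ne_zero.2 hne)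
    have hsub : circAvg (fun τ => K (Complex.exp (a * Complex.I)) τ * f τ) -
        circAvg (fun τ => K (Complex.exp (b * Complex.I)) τ * f τ) =
        circAvg (fun τ => (K (Complex.exp (a * Complex.I)) τ -
          K (Complex.exp (b * Complex.I)) τ) * f τ) := by
      unfold circAvg
      rw [← mul_sub, ← circleIntegral.integral_sub
        (aux_circInt α hα0 hα1 C₀ hC K hKm hK f M hfm hf a)
        (aux_circInt α hα0 hα1 C₀ hC K hKm hK f M hfm hf b)]
      simp only [sub_mul]
    rw [hsub]
    have h := (aux_circ (fun τ => (K (Complex.exp (a * Complex.I)) τ -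
          K (Complex.exp (b * Complex.I)) τ) * f τ)).trans
      (aux_diff α hα0 hα1 C₀ hC K hK hD f M hf a b δ hδ0 rfl)
    rw [← ofReal_norm, ← ENNReal.ofReal_mul (by positivity : 0 ≤ δ * 2 ^ (1 + α)),
      ← ENNReal.ofReal_mul hC.le, ← ENNReal.ofReal_add (by positivity) (by positivity),
      ← ENNReal.ofReal_add (by positivity) (by positivity),
      ← ENNReal.ofReal_mul (by positivity), ENNReal.ofReal_le_ofReal_iff (by positivity)] at h
    have e1 : 2 * ((2 / Real.pi) ^ (-α) * ((Real.pi / 2 * (2 * δ)) ^ (1 - α) / (1 - α)))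
        = A2 * δ ^ (1 - α) := by
      rw [hA2, ← mul_assoc (Real.pi / 2), Real.mul_rpow (by positivity) hδ0.le]; ring
    have e2 : 2 * ((2 / Real.pi) ^ (-α) * ((Real.pi / 2 * (3 * δ)) ^ (1 - α) / (1 - α)))
        = A * δ ^ (1 - α) := by
      rw [hA, ← mul_assoc (Real.pi / 2), Real.mul_rpow (by positivity) hδ0.le]; ring
    have e3 : δ * 2 ^ (1 + α) * (2 * ((2 / Real.pi) ^ (-(1 + α)) * ((2 * δ / 2) ^ (-α) / α)))
        = B * δ ^ (1 - α) := by
      rw [hB, mul_div_cancel_left₀ δ (by norm_num : (2:ℝ) ≠ 0), sub_eq_add_neg 1 α,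
        Real.rpow_add hδ0, Real.rpow_one]; ring
    rw [e1, e2, e3] at h
    have hch := aux_le_chord a b hab
    set x := ‖Complex.exp (a * Complex.I) - Complex.exp (b * Complex.I)‖ with hx
    have hδx : δ ≤ Real.pi / 2 * x := by
      rw [div_mul_eq_mul_div, div_le_iff₀ hpi] at hch
      linarith
    have hx0 : 0 ≤ x := norm_nonneg _
    have hpow : δ ^ (1 - α) ≤ (Real.pi / 2) ^ (1 - α) * x ^ (1 - α) := by
      rw [← Real.mul_rpow (by positivity) hx0]
      exact Real.rpow_le_rpow hδ0.le hδx h1α.le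
    calc _ ≤ _ := h
      _ = C₀ * M * (A2 + A + B) * δ ^ (1 - α) := by ring
      _ ≤ C₀ * M * (A2 + A + B) * ((Real.pi / 2) ^ (1 - α) * x ^ (1 - α)) := by gcongr
      _ = E * C₀ * M * x ^ (1 - α) := by rw [hE]; ring
      _ ≤ _ := by
        gcongr
        linarith
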